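/- arXiv:math/0007120 — 8 statements merged into one kernel-verified Lean document; each statement's English description precedes it below -/
import Mathlib

section
/- Let τ : [0,1] → ℝ be continuous and define its straightening τ' as in the context. Then: (i) τ'(0) = τ(0) and τ'(1) = τ(1); (ii) τ'(t) ∈ J(τ) for every t ∈ [0,1]; (iii) τ' is monotone nondecreasing if τ(0) ≤ τ(1) and monotone nonincreasing if τ(1) ≤ τ(0); and (iv) τ' is continuous. -/
/-- The retraction of `ℝ` onto the closed interval with endpoints `a` and `b`,
sending points above the interval to its maximum and points below to its minimum. -/
noncomputable def intervalRetract (a b x : ℝ) : ℝ := max (min a b) (min x (max a b))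

/-- The 1-dimensional straightening operator: `straighten τ t` is the infimum of values `s`
attained by `φ ∘ τ` (where `φ` is the retraction onto the interval `J(τ)` with endpoints
`τ 0` and `τ 1`) simultaneously at some `t₁ ≤ t` and some `t₂ ≥ t`. -/
noncomputable def straighten (τ : unitInterval → ℝ) : unitInterval → ℝ := fun t =>
  sInf {s : ℝ | ∃ t₁ t₂ : unitInterval, t₁ ≤ t ∧ t ≤ t₂ ∧
    intervalRetract (τ 0) (τ 1) (τ t₁) = s ∧ intervalRetract (τ 0) (τ 1) (τ t₂) = s}

/-!
Write `f = φ ∘ τ`, so that `τ' t` is the infimum of the values `f` takes both on `[0, t]` and on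
`[t, 1]`. These values form a nonempty compact set, so the infimum is attained; this puts `τ' t`
in `J(τ)` and gives `τ' 0 = f 0`, `τ' 1 = f 1`. If `τ 0 ≤ τ 1`, then `f` is smallest at `0`, and by
the intermediate value theorem its minimum on `[t, 1]` is already taken on `[0, t]`. Hence
`τ' t = min f([t, 1])`, which is nondecreasing and continuous in `t`. The case `τ 1 ≤ τ 0` follows
by reversing the order of `[0, 1]`.
-/

open Set OrderDual

section CommonValues

variable {α β : Type*}

/-- The values that `f` takes both at some point `≤ t` and at some point `≥ t`. The straightening
of a path at `t` is the infimum of this set for the retracted path. -/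
def commonValues [Preorder α] (f : α → β) (t : α) : Set β := f '' Iic t ∩ f '' Ici t

theorem mem_commonValues_self [Preorder α] (f : α → β) (t : α) : f t ∈ commonValues f t :=
  ⟨mem_image_of_mem f self_mem_Iic, mem_image_of_mem f self_mem_Ici⟩

theorem commonValues_comp_ofDual [Preorder α] (f : α → β) (t : α) :
    commonValues (f ∘ ofDual) (toDual t) = commonValues f t :=
  inter_comm _ _

theorem sInf_commonValues_bot [PartialOrder α] [OrderBot α] [ConditionallyCompleteLattice β]
    (f : α → β) : sInf (commonValues f ⊥) = f ⊥ := by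
  simp [commonValues]

theorem sInf_commonValues_top [PartialOrder α] [OrderTop α] [ConditionallyCompleteLattice β]
    (f : α → β) : sInf (commonValues f ⊤) = f ⊤ := by
  simp [commonValues]

theorem isCompact_commonValues [Preorder α] [TopologicalSpace α] [CompactSpace α]
    [ClosedIicTopology α] [ClosedIciTopology α] [TopologicalSpace β] [T2Space β] {f : α → β}
    (hf : Continuous f) (t : α) : IsCompact (commonValues f t) :=
  (isClosed_Iic.isCompact.image hf).inter (isClosed_Ici.isCompact.image hf)

theorem sInf_mem_commonValues [Preorder α] [TopologicalSpace α] [CompactSpace α]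
    [ClosedIicTopology α] [ClosedIciTopology α] [ConditionallyCompleteLinearOrder β]
    [TopologicalSpace β] [OrderTopology β] {f : α → β} (hf : Continuous f) (t : α) :
    sInf (commonValues f t) ∈ commonValues f t :=
  (isCompact_commonValues hf t).sInf_mem ⟨f t, mem_commonValues_self f t⟩

end CommonValues

section TailInfimum

variable {α β : Type*}

theorem monotone_sInf_image_Ici [Preorder α] [ConditionallyCompleteLattice β] {f : α → β}
    (hf : BddBelow (range f)) : Monotone fun t ↦ sInf (f '' Ici t) := fun _ _ hst ↦
  csInf_le_csInf (hf.mono (image_subset_range f _)) (nonempty_Ici.image f)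
    (image_mono (Ici_subset_Ici.2 hst))

/-- `Ici t` is the image of `max t`, so this is an infimum over a fixed compact index set. -/
theorem continuous_sInf_image_Ici [LinearOrder α] [TopologicalSpace α] [OrderClosedTopology α]
    [CompactSpace α] [ConditionallyCompleteLinearOrder β] [TopologicalSpace β] [OrderTopology β]
    {f : α → β} (hf : Continuous f) : Continuous fun t ↦ sInf (f '' Ici t) := by
  have image_Ici (t : α) : f '' Ici t = (fun s ↦ f (max t s)) '' univ := by
    ext y
    constructor
    · rintro ⟨s, hs, rfl⟩
      exact ⟨s, mem_univ s, congrArg f (max_eq_right hs)⟩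
    · rintro ⟨s, -, rfl⟩
      exact mem_image_of_mem f (le_max_left t s)
  simp only [image_Ici]
  exact isCompact_univ.continuous_sInf (f := fun t s ↦ f (max t s))
    (hf.comp (continuous_fst.max continuous_snd))

end TailInfimum

theorem compactSpace_of_compactIccSpace (α : Type*) [PartialOrder α] [BoundedOrder α]
    [TopologicalSpace α] [CompactIccSpace α] : CompactSpace α :=
  ⟨Icc_bot_top (α := α) ▸ isCompact_Icc⟩

section Straightening

variable {α β : Type*} [ConditionallyCompleteLinearOrder α] [BoundedOrder α] [DenselyOrdered α]
  [TopologicalSpace α] [OrderTopology α] [ConditionallyCompleteLinearOrder β] [TopologicalSpace β]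
  [OrderTopology β] {f : α → β}

theorem sInf_commonValues_eq_sInf_image_Ici (hf : Continuous f) (hbot : ∀ x, f ⊥ ≤ f x) (t : α) :
    sInf (commonValues f t) = sInf (f '' Ici t) := by
  have := compactSpace_of_compactIccSpace α
  have tail_min : IsLeast (f '' Ici t) (sInf (f '' Ici t)) :=
    (isClosed_Ici.isCompact.image hf).isLeast_sInf (nonempty_Ici.image f)
  have tail_min_le : sInf (f '' Ici t) ≤ f t := tail_min.2 (mem_image_of_mem f self_mem_Ici)
  have bot_le_tail_min : f ⊥ ≤ sInf (f '' Ici t) :=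
    le_csInf (nonempty_Ici.image f) (forall_mem_image.2 fun x _ ↦ hbot x)
  have tail_min_mem : sInf (f '' Ici t) ∈ f '' Iic t :=
    image_mono Icc_subset_Iic_self
      (intermediate_value_Icc bot_le hf.continuousOn ⟨bot_le_tail_min, tail_min_le⟩)
  exact IsLeast.csInf_eq ⟨⟨tail_min_mem, tail_min.1⟩, fun _ hs ↦ tail_min.2 hs.2⟩

theorem monotone_sInf_commonValues_of_bot_le (hf : Continuous f) (hbot : ∀ x, f ⊥ ≤ f x) :
    Monotone fun t ↦ sInf (commonValues f t) := by
  simp only [sInf_commonValues_eq_sInf_image_Ici hf hbot]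
  exact monotone_sInf_image_Ici ⟨f ⊥, forall_mem_range.2 hbot⟩

theorem continuous_sInf_commonValues_of_bot_le (hf : Continuous f) (hbot : ∀ x, f ⊥ ≤ f x) :
    Continuous fun t ↦ sInf (commonValues f t) := by
  simp only [sInf_commonValues_eq_sInf_image_Ici hf hbot]
  have := compactSpace_of_compactIccSpace α
  exact continuous_sInf_image_Ici hf

theorem antitone_sInf_commonValues_of_top_le (hf : Continuous f) (htop : ∀ x, f ⊤ ≤ f x) :
    Antitone fun t ↦ sInf (commonValues f t) := by
  simp only [← commonValues_comp_ofDual f]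
  exact (monotone_sInf_commonValues_of_bot_le (hf.comp continuous_ofDual) htop).dual_left

theorem continuous_sInf_commonValues_of_top_le (hf : Continuous f) (htop : ∀ x, f ⊤ ≤ f x) :
    Continuous fun t ↦ sInf (commonValues f t) := by
  simp only [← commonValues_comp_ofDual f]
  exact (continuous_sInf_commonValues_of_bot_le (hf.comp continuous_ofDual) htop).comp
    continuous_toDual

end Straightening

theorem continuous_intervalRetract (a b : ℝ) : Continuous (intervalRetract a b) := by
  unfold intervalRetract
  fun_prop

theorem intervalRetract_mem_uIcc (a b x : ℝ) : intervalRetract a b x ∈ uIcc a b :=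
  ⟨le_max_left _ _, max_le min_le_max (min_le_right _ _)⟩

theorem intervalRetract_eq_self {a b x : ℝ} (hx : x ∈ uIcc a b) : intervalRetract a b x = x := by
  rw [intervalRetract, min_eq_left hx.2]
  exact max_eq_right hx.1

section RetractedPath

variable (τ : unitInterval → ℝ)

/-- The path `τ₁ = φ_τ ∘ τ`, retracted to the interval spanned by the endpoints of `τ`. -/
noncomputable def retractedPath (t : unitInterval) : ℝ := intervalRetract (τ 0) (τ 1) (τ t)

theorem straighten_eq_sInf_commonValues :
    straighten τ = fun t ↦ sInf (commonValues (retractedPath τ) t) := by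
  funext t
  refine congrArg sInf (Set.ext fun s ↦ ⟨?_, ?_⟩)
  · rintro ⟨t₁, t₂, ht₁, ht₂, hs₁, hs₂⟩
    exact ⟨⟨t₁, ht₁, hs₁⟩, ⟨t₂, ht₂, hs₂⟩⟩
  · rintro ⟨⟨t₁, ht₁, hs₁⟩, ⟨t₂, ht₂, hs₂⟩⟩
    exact ⟨t₁, t₂, ht₁, ht₂, hs₁, hs₂⟩

theorem retractedPath_mem_uIcc (t : unitInterval) : retractedPath τ t ∈ uIcc (τ 0) (τ 1) :=
  intervalRetract_mem_uIcc _ _ _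

theorem retractedPath_zero : retractedPath τ 0 = τ 0 := intervalRetract_eq_self left_mem_uIcc

theorem retractedPath_one : retractedPath τ 1 = τ 1 := intervalRetract_eq_self right_mem_uIcc

variable {τ}

theorem continuous_retractedPath (hτ : Continuous τ) : Continuous (retractedPath τ) :=
  (continuous_intervalRetract _ _).comp hτ

theorem retractedPath_zero_le (h : τ 0 ≤ τ 1) (t : unitInterval) :
    retractedPath τ 0 ≤ retractedPath τ t := by
  rw [retractedPath_zero]
  exact (uIcc_of_le h ▸ retractedPath_mem_uIcc τ t).1

theorem retractedPath_one_le (h : τ 1 ≤ τ 0) (t : unitInterval) :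
    retractedPath τ 1 ≤ retractedPath τ t := by
  rw [retractedPath_one]
  exact (uIcc_of_ge h ▸ retractedPath_mem_uIcc τ t).1

end RetractedPath

theorem straighten_props (τ : unitInterval → ℝ) (hτ : Continuous τ) :
    straighten τ 0 = τ 0 ∧ straighten τ 1 = τ 1 ∧
    (∀ t, straighten τ t ∈ Set.uIcc (τ 0) (τ 1)) ∧
    (τ 0 ≤ τ 1 → Monotone (straighten τ)) ∧
    (τ 1 ≤ τ 0 → Antitone (straighten τ)) ∧
    Continuous (straighten τ) := by
  have hf := continuous_retractedPath hτ
  rw [straighten_eq_sInf_commonValues]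
  refine ⟨?_, ?_, fun t ↦ ?_, fun h ↦ ?_, fun h ↦ ?_, ?_⟩
  · exact (sInf_commonValues_bot _).trans (retractedPath_zero τ)
  · exact (sInf_commonValues_top _).trans (retractedPath_one τ)
  · obtain ⟨⟨t₁, -, ht₁⟩, -⟩ := sInf_mem_commonValues hf t
    exact Set.mem_of_eq_of_mem ht₁.symm (retractedPath_mem_uIcc τ t₁)
  · exact monotone_sInf_commonValues_of_bot_le hf (retractedPath_zero_le h)
  · exact antitone_sInf_commonValues_of_top_le hf (retractedPath_one_le h)
  · rcases le_total (τ 0) (τ 1) with h | h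
    · exact continuous_sInf_commonValues_of_bot_le hf (retractedPath_zero_le h)
    · exact continuous_sInf_commonValues_of_top_le hf (retractedPath_one_le h)
end

section
/- The straightening operator is a projection onto monotone maps: if τ : [0,1] → ℝ is continuous and monotone (either nondecreasing or nonincreasing), then its straightening τ' is equal to τ. -/
theorem intervalRetract_of_mem_uIcc {a b x : ℝ} (hx : x ∈ Set.uIcc a b) :
    intervalRetract a b x = x := by
  rw [intervalRetract, min_eq_left hx.2, max_eq_right hx.1]

theorem image_Iic_inter_image_Ici_of_ordConnected_fibers {α β : Type*} [Preorder α] {f : α → β}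
    (hf : ∀ y, (f ⁻¹' {y}).OrdConnected) (t : α) :
    f '' Set.Iic t ∩ f '' Set.Ici t = {f t} := by
  refine Set.Subset.antisymm ?_ (Set.singleton_subset_iff.2
    ⟨Set.mem_image_of_mem f Set.self_mem_Iic, Set.mem_image_of_mem f Set.self_mem_Ici⟩)
  rintro y ⟨⟨t₁, ht₁, hy₁⟩, ⟨t₂, ht₂, hy₂⟩⟩
  have ht : t ∈ f ⁻¹' {y} := (hf y).out hy₁ hy₂ ⟨ht₁, ht₂⟩
  exact ht.symm

theorem ordConnected_fiber_of_monotone_or_antitone {α β : Type*} [Preorder α] [PartialOrder β]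
    {f : α → β} (hf : Monotone f ∨ Antitone f) (y : β) : (f ⁻¹' {y}).OrdConnected :=
  hf.elim Set.ordConnected_singleton.preimage_mono Set.ordConnected_singleton.preimage_anti

theorem mem_uIcc_bot_top_of_monotone_or_antitone {α β : Type*} [Preorder α] [BoundedOrder α]
    [Lattice β] {f : α → β} (hf : Monotone f ∨ Antitone f) (t : α) :
    f t ∈ Set.uIcc (f ⊥) (f ⊤) :=
  hf.elim (fun h => Set.mem_uIcc_of_le (h bot_le) (h le_top))
    (fun h => Set.mem_uIcc_of_ge (h le_top) (h bot_le))

theorem straighten_apply (τ : unitInterval → ℝ) (t : unitInterval) :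
    straighten τ t = sInf ((intervalRetract (τ 0) (τ 1) ∘ τ) '' Set.Iic t ∩
      (intervalRetract (τ 0) (τ 1) ∘ τ) '' Set.Ici t) := by
  refine congrArg sInf (Set.ext fun s => ⟨?_, ?_⟩)
  · rintro ⟨t₁, t₂, ht₁, ht₂, hs₁, hs₂⟩
    exact ⟨⟨t₁, ht₁, hs₁⟩, ⟨t₂, ht₂, hs₂⟩⟩
  · rintro ⟨⟨t₁, ht₁, hs₁⟩, ⟨t₂, ht₂, hs₂⟩⟩
    exact ⟨t₁, t₂, ht₁, ht₂, hs₁, hs₂⟩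

theorem straighten_eq_self_of_ordConnected_fibers {τ : unitInterval → ℝ}
    (hmem : ∀ t, τ t ∈ Set.uIcc (τ 0) (τ 1)) (hfib : ∀ y, (τ ⁻¹' {y}).OrdConnected) :
    straighten τ = τ := by
  have hretract : intervalRetract (τ 0) (τ 1) ∘ τ = τ :=
    funext fun t => intervalRetract_of_mem_uIcc (hmem t)
  funext t
  rw [straighten_apply, hretract, image_Iic_inter_image_Ici_of_ordConnected_fibers hfib,
    csInf_singleton]

theorem straighten_of_monotone_general {τ : unitInterval → ℝ} (hmono : Monotone τ ∨ Antitone τ) :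
    straighten τ = τ :=
  straighten_eq_self_of_ordConnected_fibers (mem_uIcc_bot_top_of_monotone_or_antitone hmono)
    (ordConnected_fiber_of_monotone_or_antitone hmono)

theorem straighten_of_monotone (τ : unitInterval → ℝ) (hτ : Continuous τ)
    (hmono : Monotone τ ∨ Antitone τ) : straighten τ = τ :=
  straighten_of_monotone_general hmono
end

section
/- The straightening operator uses only the order structure of ℝ and is hence equivariant under order-preserving homeomorphisms: if τ : [0,1] → ℝ is continuous and g : ℝ → ℝ is a strictly increasing homeomorphism, then the straightening of g ∘ τ equals g composed with the straightening of τ, i.e. (g ∘ τ)' = g ∘ τ'. -/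
/-!
The retraction onto `J(τ)` is built from `min` and `max`, hence commutes with monotone maps, and an
injective map carries the set of values that `τ₁` takes on both sides of `t` onto the corresponding
set for its composite with `τ₁`. This set is nonempty and bounded below by `min J(τ)`, so a
continuous monotone map preserves its infimum.
-/

open Set

section SharedValues

variable {α β γ : Type*} [Preorder α]

/-- The values that `f` attains both at some point `≤ t` and at some point `≥ t`; for `f = τ₁`
this is the set whose infimum is the straightening of `τ` at `t`. -/
def sharedValues (f : α → β) (t : α) : Set β := f '' Iic t ∩ f '' Ici t

theorem sharedValues_nonempty (f : α → β) (t : α) : (sharedValues f t).Nonempty :=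
  ⟨f t, mem_image_of_mem f self_mem_Iic, mem_image_of_mem f self_mem_Ici⟩

theorem sharedValues_subset_range (f : α → β) (t : α) : sharedValues f t ⊆ range f :=
  inter_subset_left.trans (image_subset_range f (Iic t))

theorem image_sharedValues {g : β → γ} (hg : g.Injective) (f : α → β) (t : α) :
    g '' sharedValues f t = sharedValues (g ∘ f) t := by
  simp only [sharedValues, image_inter hg, image_comp]

end SharedValues

theorem intervalRetract_map {g : ℝ → ℝ} (hg : Monotone g) (a b x : ℝ) :
    intervalRetract (g a) (g b) (g x) = g (intervalRetract a b x) := by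
  simp only [intervalRetract, hg.map_max, hg.map_min]

theorem bddBelow_range_intervalRetract (a b : ℝ) : BddBelow (range (intervalRetract a b)) :=
  ⟨min a b, forall_mem_range.2 fun _ => le_max_left _ _⟩

theorem straighten_eq_sInf_sharedValues (τ : unitInterval → ℝ) (t : unitInterval) :
    straighten τ t = sInf (sharedValues (intervalRetract (τ 0) (τ 1) ∘ τ) t) := by
  refine congrArg sInf (Set.ext fun s => ⟨?_, ?_⟩)
  · rintro ⟨t₁, t₂, ht₁, ht₂, hs₁, hs₂⟩
    exact ⟨⟨t₁, ht₁, hs₁⟩, ⟨t₂, ht₂, hs₂⟩⟩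
  · rintro ⟨⟨t₁, ht₁, hs₁⟩, ⟨t₂, ht₂, hs₂⟩⟩
    exact ⟨t₁, t₂, ht₁, ht₂, hs₁, hs₂⟩

theorem straighten_equivariant_general (τ : unitInterval → ℝ) {g : ℝ → ℝ} (hg : StrictMono g)
    (hg_cont : Continuous g) : straighten (g ∘ τ) = g ∘ straighten τ := by
  funext t
  let τ₁ := intervalRetract (τ 0) (τ 1) ∘ τ
  have retract_comp : intervalRetract (g (τ 0)) (g (τ 1)) ∘ g ∘ τ = g ∘ τ₁ :=
    funext fun u => intervalRetract_map hg.monotone (τ 0) (τ 1) (τ u)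
  have bddBelow_shared : BddBelow (sharedValues τ₁ t) :=
    (bddBelow_range_intervalRetract (τ 0) (τ 1)).mono
      ((sharedValues_subset_range τ₁ t).trans (range_comp_subset_range τ _))
  calc straighten (g ∘ τ) t
      = sInf (sharedValues (g ∘ τ₁) t) := by
        rw [straighten_eq_sInf_sharedValues, ← retract_comp]; rfl
    _ = sInf (g '' sharedValues τ₁ t) := by rw [image_sharedValues hg.injective]
    _ = g (sInf (sharedValues τ₁ t)) :=
        (hg.monotone.map_csInf_of_continuousAt hg_cont.continuousAt
          (sharedValues_nonempty τ₁ t) bddBelow_shared).symm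
    _ = g (straighten τ t) := by rw [straighten_eq_sInf_sharedValues]

theorem straighten_equivariant (τ : unitInterval → ℝ) (hτ : Continuous τ)
    (g : ℝ ≃ₜ ℝ) (hg : StrictMono g) :
    straighten (fun t => g (τ t)) = fun t => g (straighten τ t) :=
  straighten_equivariant_general τ hg g.continuous
end

section
/- The straightening operator τ ↦ τ' is a well-defined continuous self-map of C([0,1], ℝ): for every continuous τ the straightening τ' is again continuous, and the map from C([0,1], ℝ) to C([0,1], ℝ) sending τ to τ' is continuous with respect to the topology of uniform convergence (the compact–open topology). -/
/-!
For continuous `f`, the images of `[0, t]` and `[t, 1]` are compact intervals having `f t` in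
common. The least element of the intersection of two such intervals is the larger of their least
elements, so the infimum defining the straightening is the maximum of the minima of `f` over
`[0, t]` and over `[t, 1]`. Both minima depend continuously on `(f, t)` jointly, and currying turns
this into continuity of the operator. The retraction `φ_τ` enters only through its continuity in
`τ`.
-/

open Set Function

section Order

variable {α : Type*} [LinearOrder α]

lemma isLeast_inter_max {s t : Set α} {a b : α} (hs : s.OrdConnected) (ht : t.OrdConnected)
    (ha : IsLeast s a) (hb : IsLeast t b) (hst : (s ∩ t).Nonempty) :
    IsLeast (s ∩ t) (max a b) := by
  obtain ⟨c, hcs, hct⟩ := hst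
  have hc : max a b ≤ c := max_le (ha.2 hcs) (hb.2 hct)
  exact ⟨⟨hs.out ha.1 hcs ⟨le_max_left a b, hc⟩, ht.out hb.1 hct ⟨le_max_right a b, hc⟩⟩,
    fun _ hx ↦ max_le (ha.2 hx.1) (hb.2 hx.2)⟩

lemma range_min_eq_Iic (t : α) : range (min t) = Iic t :=
  Subset.antisymm (range_subset_iff.2 fun _ ↦ min_le_left _ _) fun u hu ↦ ⟨u, min_eq_right hu⟩

lemma range_max_eq_Ici (t : α) : range (max t) = Ici t :=
  Subset.antisymm (range_subset_iff.2 fun _ ↦ le_max_left _ _) fun u hu ↦ ⟨u, max_eq_right hu⟩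

end Order

section Topology

variable {α β : Type*} [TopologicalSpace α]

lemma isPreconnected_Iic_of_preconnectedSpace [LinearOrder α] [OrderClosedTopology α]
    [PreconnectedSpace α] (t : α) : IsPreconnected (Iic t) :=
  range_min_eq_Iic t ▸ isPreconnected_range (by fun_prop)

lemma isPreconnected_Ici_of_preconnectedSpace [LinearOrder α] [OrderClosedTopology α]
    [PreconnectedSpace α] (t : α) : IsPreconnected (Ici t) :=
  range_max_eq_Ici t ▸ isPreconnected_range (by fun_prop)

variable [TopologicalSpace β] [ConditionallyCompleteLinearOrder β]

lemma csInf_image_inter_image_eq_max [OrderClosedTopology β] {f : α → β} (hf : Continuous f)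
    {s t : Set α} (hs : IsCompact s) (ht : IsCompact t) (hs' : IsPreconnected s)
    (ht' : IsPreconnected t) (hst : (s ∩ t).Nonempty) :
    sInf (f '' s ∩ f '' t) = max (sInf (f '' s)) (sInf (f '' t)) :=
  have hleast {u : Set α} (hu : IsCompact u) (hu' : u.Nonempty) :
      IsLeast (f '' u) (sInf (f '' u)) := (hu.image hf).isLeast_sInf (hu'.image f)
  have hord {u : Set α} (hu : IsPreconnected u) : (f '' u).OrdConnected :=
    (hu.image f hf.continuousOn).ordConnected
  (isLeast_inter_max (hord hs') (hord ht') (hleast hs hst.left) (hleast ht hst.right)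
    ((hst.image f).mono (image_inter_subset f s t))).csInf_eq

lemma continuous_sInf_image_range [OrderTopology β] [LocallyCompactSpace α]
    {X K : Type*} [TopologicalSpace X] [TopologicalSpace K] [CompactSpace K]
    {r : X → K → α} (hr : Continuous ↿r) :
    Continuous fun p : C(α, β) × X ↦ sInf (p.1 '' range (r p.2)) := by
  have hcomp : Continuous ↿fun (p : C(α, β) × X) (k : K) ↦ p.1 (r p.2 k) :=
    continuous_fst.fst.eval (hr.comp (continuous_fst.snd.prodMk continuous_snd))
  simpa only [← range_comp, image_univ, comp_def] using isCompact_univ.continuous_sInf hcomp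

end Topology

/-- The infimum of the levels that `f` attains both on `Iic t` and on `Ici t`: the
straightening of `f` at `t` without the preliminary retraction. -/
noncomputable def infCommonValue {α β : Type*} [Preorder α] [InfSet β] (f : α → β) (t : α) : β :=
  sInf (f '' Iic t ∩ f '' Ici t)

section InfCommonValue

variable {α β : Type*} [TopologicalSpace α] [LinearOrder α] [OrderClosedTopology α]
  [CompactSpace α] [PreconnectedSpace α] [TopologicalSpace β] [ConditionallyCompleteLinearOrder β]

lemma infCommonValue_eq_max [OrderClosedTopology β] {f : α → β} (hf : Continuous f) (t : α) :
    infCommonValue f t = max (sInf (f '' Iic t)) (sInf (f '' Ici t)) :=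
  csInf_image_inter_image_eq_max hf isClosed_Iic.isCompact isClosed_Ici.isCompact
    (isPreconnected_Iic_of_preconnectedSpace t) (isPreconnected_Ici_of_preconnectedSpace t)
    ⟨t, self_mem_Iic, self_mem_Ici⟩

lemma continuous_infCommonValue [OrderTopology β] :
    Continuous fun p : C(α, β) × α ↦ infCommonValue p.1 p.2 := by
  have hIic : Continuous fun p : C(α, β) × α ↦ sInf (p.1 '' Iic p.2) := by
    simpa only [range_min_eq_Iic] using
      continuous_sInf_image_range (r := min (α := α)) continuous_min
  have hIci : Continuous fun p : C(α, β) × α ↦ sInf (p.1 '' Ici p.2) := by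
    simpa only [range_max_eq_Ici] using
      continuous_sInf_image_range (r := max (α := α)) continuous_max
  simpa only [infCommonValue_eq_max (map_continuous _)] using hIic.max hIci

end InfCommonValue

lemma continuous_intervalRetract_s3 :
    Continuous fun p : ℝ × ℝ × ℝ ↦ intervalRetract p.1 p.2.1 p.2.2 := by
  unfold intervalRetract
  fun_prop

/-- The operator `τ ↦ τ₁ = φ_τ ∘ τ` that truncates a path to the interval spanned by its
endpoints, bundled as a continuous self-map of `C([0,1], ℝ)`. -/
noncomputable def endpointRetract : C(C(unitInterval, ℝ), C(unitInterval, ℝ)) :=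
  ContinuousMap.curry
    { toFun p := intervalRetract (p.1 0) (p.1 1) (p.1 p.2)
      continuous_toFun := continuous_intervalRetract_s3.comp
        (f := fun p : C(unitInterval, ℝ) × unitInterval ↦ (p.1 0, p.1 1, p.1 p.2)) (by fun_prop) }

lemma straighten_eq_infCommonValue_endpointRetract (τ : C(unitInterval, ℝ)) (t : unitInterval) :
    straighten τ t = infCommonValue (endpointRetract τ) t := by
  refine congrArg sInf (Set.ext fun s ↦ ⟨?_, ?_⟩)
  · rintro ⟨t₁, t₂, h₁, h₂, rfl, h⟩
    exact ⟨⟨t₁, h₁, rfl⟩, ⟨t₂, h₂, h⟩⟩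
  · rintro ⟨⟨t₁, h₁, rfl⟩, ⟨t₂, h₂, h⟩⟩
    exact ⟨t₁, t₂, h₁, h₂, rfl, h⟩

theorem straighten_continuous_operator :
    ∃ S : C(unitInterval, ℝ) → C(unitInterval, ℝ),
      Continuous S ∧
      ∀ (τ : C(unitInterval, ℝ)) (t : unitInterval), S τ t = straighten (⇑τ) t := by
  let commonValueOperator : C(C(unitInterval, ℝ), C(unitInterval, ℝ)) :=
    ContinuousMap.curry ⟨_, continuous_infCommonValue⟩
  exact ⟨commonValueOperator.comp endpointRetract, map_continuous _,
    fun τ t ↦ (straighten_eq_infCommonValue_endpointRetract τ t).symm⟩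
end

section
/- Let v₀, v₁, v₂ ∈ ℝ² be affinely independent, let T be the convex hull of {v₀, v₁, v₂}, and let ∂T denote the frontier of T. Let τ : ∂T → ℝ be continuous with τ(v₀) < τ(v₁) < τ(v₂), and suppose τ is strictly monotone along each edge of T, i.e. for each pair i < j the function t ↦ τ((1−t)·vᵢ + t·vⱼ) is strictly monotone on [0,1]. Then for every point p ∈ T there exists a unique t ∈ [τ(v₀), τ(v₂)] such that p lies in the convex hull of the level set { x ∈ ∂T : τ(x) = t }. -/
/-!
For every level `t` there is an affine function on the plane whose sign at each boundary point `x`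
of the triangle is the sign of `τ x - t`; its vertex values are found by going around the triangle
edge by edge. Uniqueness follows at once: the affine function of a level `t` vanishes on the hull of
the level set of `t` and is positive on the hull of every higher level set. For existence, look at
all chords `[x, y]` through `p` with endpoints on the boundary. By compactness `min (τ x) (τ y)`
attains a largest value `m` and `max (τ x) (τ y)` a least value `n` on them. The chord through `p`
parallel to the zero line of the affine function of `t` shows that `t ≤ m` or `n ≤ t` for every `t`,
so `n ≤ m`, and then the affine function of the level `m` vanishes at `p`.
-/

open Set AffineMap
open scoped NNReal

section SeparatesLevel

variable {X : Type*} {φ τ : X → ℝ} {t : ℝ} {S : Set X} {x : X}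

/-- On `S`, the zero set of `φ` is the level set of `τ` at `t`, and `φ` is negative on the strict
sublevel set and positive on the strict superlevel set. For affine `φ` this says that a hyperplane
cuts `S` exactly along the level `t`. -/
def SeparatesLevel (φ τ : X → ℝ) (t : ℝ) (S : Set X) : Prop :=
  ∀ x ∈ S, SignType.sign (φ x) = SignType.sign (τ x - t)

namespace SeparatesLevel

lemma nonneg_iff (h : SeparatesLevel φ τ t S) (hx : x ∈ S) : 0 ≤ φ x ↔ t ≤ τ x := by
  rw [← sign_nonneg_iff, h x hx, sign_nonneg_iff, sub_nonneg]

lemma nonpos_iff (h : SeparatesLevel φ τ t S) (hx : x ∈ S) : φ x ≤ 0 ↔ τ x ≤ t := by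
  rw [← sign_nonpos_iff, h x hx, sign_nonpos_iff, sub_nonpos]

lemma eq_zero_iff (h : SeparatesLevel φ τ t S) (hx : x ∈ S) : φ x = 0 ↔ τ x = t := by
  rw [← sign_eq_zero_iff, h x hx, sign_eq_zero_iff, sub_eq_zero]

lemma pos_iff (h : SeparatesLevel φ τ t S) (hx : x ∈ S) : 0 < φ x ↔ t < τ x := by
  rw [← sign_eq_one_iff, h x hx, sign_eq_one_iff, sub_pos]

lemma neg (h : SeparatesLevel φ τ t S) : SeparatesLevel (-φ) (-τ) (-t) S := fun x hx ↦ by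
  rw [Pi.neg_apply, Pi.neg_apply, neg_sub_neg, ← neg_sub, Left.sign_neg, Left.sign_neg, h x hx]

end SeparatesLevel

end SeparatesLevel

section Interval

variable {g : ℝ → ℝ} {a b t : ℝ}

lemma separatesLevel_mul_sub {S : Set ℝ} {c r : ℝ} (hg : StrictMonoOn g S)
    (hr : r ∈ S) (hc : 0 < c) : SeparatesLevel (fun s ↦ c * (s - r)) g (g r) S := by
  intro s hs
  rw [sign_mul, sign_pos hc, one_mul]
  rcases lt_trichotomy s r with hsr | rfl | hsr
  · rw [sign_neg (sub_neg.2 hsr), sign_neg (sub_neg.2 (hg hs hr hsr))]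
  · rw [sub_self, sub_self]
  · rw [sign_pos (sub_pos.2 hsr), sign_pos (sub_pos.2 (hg hr hs hsr))]

lemma exists_separatesLevel_lineMap (hgc : ContinuousOn g (Icc 0 1))
    (hg : StrictMonoOn g (Icc 0 1)) (hgt : g 0 ≤ t)
    (ha : SignType.sign a = SignType.sign (g 0 - t)) :
    ∃ b : ℝ, SeparatesLevel (lineMap a b) g t (Icc 0 1) := by
  have h0 : (0 : ℝ) ∈ Icc (0 : ℝ) 1 := left_mem_Icc.2 zero_le_one
  rcases hgt.eq_or_lt with rfl | hgt
  · obtain rfl : a = 0 := by simpa using ha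
    refine ⟨1, fun s hs ↦ ?_⟩
    simpa [lineMap_apply_ring] using separatesLevel_mul_sub hg h0 one_pos s hs
  rw [sign_neg (sub_neg.2 hgt), sign_eq_neg_one_iff] at ha
  rcases lt_or_ge (g 1) t with hg1 | hg1
  · refine ⟨a, fun s hs ↦ ?_⟩
    have hgs : g s < t := (hg.monotoneOn.mapsTo_Icc hs).2.trans_lt hg1
    rw [lineMap_same_apply, sign_neg ha, sign_neg (sub_neg.2 hgs)]
  · obtain ⟨r, hr, rfl⟩ := intermediate_value_Icc zero_le_one hgc ⟨hgt.le, hg1⟩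
    have hr0 : 0 < r := (hg.lt_iff_lt h0 hr).1 hgt
    refine ⟨a - a / r, ?_⟩
    convert! separatesLevel_mul_sub hg hr (div_pos (neg_pos.2 ha) hr0) using 1
    ext s
    rw [lineMap_apply_ring]
    field

lemma separatesLevel_lineMap_of_le (hg : StrictMonoOn g (Icc 0 1)) (hgt : t ≤ g 0)
    (ha : SignType.sign a = SignType.sign (g 0 - t)) (hb : 0 < b) :
    SeparatesLevel (lineMap a b) g t (Icc 0 1) := by
  intro s hs
  have ha0 : 0 ≤ a := by rwa [← sign_nonneg_iff, ha, sign_nonneg_iff, sub_nonneg]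
  rcases hs.1.eq_or_lt with rfl | hs0
  · rw [lineMap_apply_zero, ha]
  · have hgs : t < g s := hgt.trans_lt (hg (left_mem_Icc.2 zero_le_one) hs hs0)
    have hpos : 0 < lineMap a b s := by
      rw [lineMap_apply_ring]
      have := sub_nonneg.2 hs.2
      positivity
    rw [sign_pos hpos, sign_pos (sub_pos.2 hgs)]

end Interval

section Module

variable {E : Type*} [AddCommGroup E] [Module ℝ E] {F : Set E} {p : E} {τ : E → ℝ}
  {φ : E →ᵃ[ℝ] ℝ} {t : ℝ} {q : E × E}

lemma SeparatesLevel.disjoint_convexHull (h : SeparatesLevel φ τ t F) {t' : ℝ} (ht : t < t') :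
    Disjoint (convexHull ℝ {x | x ∈ F ∧ τ x = t}) (convexHull ℝ {x | x ∈ F ∧ τ x = t'}) := by
  have hzero : convexHull ℝ {x | x ∈ F ∧ τ x = t} ⊆ φ ⁻¹' {0} :=
    convexHull_min (fun x hx ↦ (h.eq_zero_iff hx.1).2 hx.2) ((convex_singleton 0).affine_preimage φ)
  have hpos : convexHull ℝ {x | x ∈ F ∧ τ x = t'} ⊆ φ ⁻¹' Ioi 0 :=
    convexHull_min (fun x hx ↦ (h.pos_iff hx.1).2 (hx.2 ▸ ht)) ((convex_Ioi 0).affine_preimage φ)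
  exact (Disjoint.preimage φ (by simp)).mono hzero hpos

/-- The chords of `F` through `p`, as ordered pairs of endpoints; for `p ∈ F` the degenerate chord
`(p, p)` is included. The level through `p` is found by extremizing `τ` over these endpoints. -/
def chordsThrough (F : Set E) (p : E) : Set (E × E) :=
  {q ∈ F ×ˢ F | p ∈ segment ℝ q.1 q.2}

lemma SeparatesLevel.nonneg_of_mem_chordsThrough (h : SeparatesLevel φ τ t F)
    (hq : q ∈ chordsThrough F p) (ht : t ≤ min (τ q.1) (τ q.2)) : 0 ≤ φ p :=
  ((convex_Ici 0).affine_preimage φ).segment_subset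
    ((h.nonneg_iff hq.1.1).2 (ht.trans (min_le_left _ _)))
    ((h.nonneg_iff hq.1.2).2 (ht.trans (min_le_right _ _))) hq.2

lemma SeparatesLevel.nonpos_of_mem_chordsThrough (h : SeparatesLevel φ τ t F)
    (hq : q ∈ chordsThrough F p) (ht : max (τ q.1) (τ q.2) ≤ t) : φ p ≤ 0 :=
  ((convex_Iic 0).affine_preimage φ).segment_subset
    ((h.nonpos_iff hq.1.1).2 ((le_max_left _ _).trans ht))
    ((h.nonpos_iff hq.1.2).2 ((le_max_right _ _).trans ht)) hq.2

lemma isCompact_chordsThrough [TopologicalSpace E] [IsTopologicalAddGroup E]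
    [ContinuousSMul ℝ E] [T2Space E] (hF : IsCompact F) (p : E) :
    IsCompact (chordsThrough F p) := by
  have hC : IsCompact ((F ×ˢ F) ×ˢ Icc (0 : ℝ) 1 ∩ {q | lineMap q.1.1 q.1.2 q.2 = p}) :=
    ((hF.prod hF).prod isCompact_Icc).inter_right <|
      isClosed_eq (by simp only [lineMap_apply_module]; fun_prop) continuous_const
  convert hC.image continuous_fst
  ext q
  simp [chordsThrough, segment_eq_image_lineMap, and_assoc, Prod.ext_iff]

end Module

section Chords

variable {E : Type*} [NormedAddCommGroup E] [NormedSpace ℝ E] {K : Set E} {p d : E}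

lemma exists_add_smul_mem_frontier (hK : Bornology.IsBounded K) (hp : p ∈ K) (hd : d ≠ 0) :
    ∃ s : ℝ≥0, p + s • d ∈ frontier K := by
  let ray : ℝ≥0 → E := fun s ↦ p + s • d
  have ray_cont : Continuous ray := by fun_prop
  suffices (frontier (ray ⁻¹' K)).Nonempty from
    this.mono (ray_cont.frontier_preimage_subset K)
  refine nonempty_frontier_iff.2 ⟨⟨0, by simpa [ray] using hp⟩, fun huniv ↦ ?_⟩
  obtain ⟨r, hr⟩ := hK.subset_closedBall p
  have hray (s : ℝ≥0) : s * ‖d‖ ≤ r := by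
    have hs : ray s ∈ K := huniv.symm.subset (mem_univ s)
    simpa [ray, norm_smul, NNReal.smul_def] using hr hs
  obtain ⟨n, hn⟩ := exists_nat_gt (r / ‖d‖)
  exact (hray n).not_gt (by simpa [div_lt_iff₀ (norm_pos_iff.2 hd)] using hn)

lemma exists_ne_zero_map_eq_zero_of_one_lt_rank {k V : Type*} [Field k] [AddCommGroup V]
    [Module k V] (hV : 1 < Module.rank k V) (f : V →ₗ[k] k) : ∃ d ≠ 0, f d = 0 := by
  by_contra! hf
  have hinj : Function.Injective f := (injective_iff_map_eq_zero f).2 fun d ↦ not_imp_not.1 (hf d)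
  exact hV.not_ge (by simpa using f.lift_rank_le_of_injective hinj)

lemma exists_mem_chordsThrough_frontier_map_eq (hE : 1 < Module.rank ℝ E)
    (hK : Bornology.IsBounded K) (hp : p ∈ K) (φ : E →ᵃ[ℝ] ℝ) :
    ∃ q ∈ chordsThrough (frontier K) p, φ q.1 = φ p ∧ φ q.2 = φ p := by
  obtain ⟨d, hd, hφd⟩ := exists_ne_zero_map_eq_zero_of_one_lt_rank hE φ.linear
  have hφ (s : ℝ≥0) (e : E) (he : φ.linear e = 0) : φ (p + s • e) = φ p := by
    rw [add_comm, ← vadd_eq_add, φ.map_vadd, NNReal.smul_def, map_smul, he, smul_zero, zero_vadd]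
  obtain ⟨r, hr⟩ := exists_add_smul_mem_frontier hK hp (neg_ne_zero.2 hd)
  obtain ⟨s, hs⟩ := exists_add_smul_mem_frontier hK hp hd
  refine ⟨(p + r • -d, p + s • d), ⟨⟨hr, hs⟩, ?_⟩, hφ r _ (by simpa using hφd), hφ s _ hφd⟩
  rw [mem_segment_iff_sameRay]
  simpa [NNReal.smul_def] using (SameRay.sameRay_nonneg_smul_left d r.2).nonneg_smul_right s.2

end Chords

section Levels

variable {E : Type*} [NormedAddCommGroup E] [NormedSpace ℝ E] {K : Set E} {p : E}
  {τ : E → ℝ} {φ : E →ᵃ[ℝ] ℝ} {t : ℝ}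

lemma SeparatesLevel.exists_chord_le_min_or_max_le (h : SeparatesLevel φ τ t (frontier K))
    (hE : 1 < Module.rank ℝ E) (hK : Bornology.IsBounded K) (hp : p ∈ K) :
    ∃ q ∈ chordsThrough (frontier K) p, t ≤ min (τ q.1) (τ q.2) ∨ max (τ q.1) (τ q.2) ≤ t := by
  obtain ⟨q, hq, hq₁, hq₂⟩ := exists_mem_chordsThrough_frontier_map_eq hE hK hp φ
  refine ⟨q, hq, ?_⟩
  rw [le_min_iff, max_le_iff, ← h.nonneg_iff hq.1.1, ← h.nonneg_iff hq.1.2,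
    ← h.nonpos_iff hq.1.1, ← h.nonpos_iff hq.1.2, hq₁, hq₂, and_self, and_self]
  exact le_total 0 (φ p)

lemma SeparatesLevel.mem_convexHull_of_map_eq_zero (h : SeparatesLevel φ τ t (frontier K))
    (hE : 1 < Module.rank ℝ E) (hK : Bornology.IsBounded K) (hp : p ∈ K) (hφp : φ p = 0) :
    p ∈ convexHull ℝ {x | x ∈ frontier K ∧ τ x = t} := by
  obtain ⟨q, ⟨⟨hq₁F, hq₂F⟩, hpq⟩, hq₁, hq₂⟩ :=
    exists_mem_chordsThrough_frontier_map_eq hE hK hp φ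
  rw [hφp] at hq₁ hq₂
  exact segment_subset_convexHull (s := {x | x ∈ frontier K ∧ τ x = t})
    ⟨hq₁F, (h.eq_zero_iff hq₁F).1 hq₁⟩ ⟨hq₂F, (h.eq_zero_iff hq₂F).1 hq₂⟩ hpq

variable {a b : ℝ}

lemma exists_level_mem_convexHull (hE : 1 < Module.rank ℝ E) (hK : IsCompact K)
    (hτc : ContinuousOn τ (frontier K)) (hτ : MapsTo τ (frontier K) (Icc a b))
    (hsep : ∀ t ∈ Icc a b, ∃ φ : E →ᵃ[ℝ] ℝ, SeparatesLevel φ τ t (frontier K)) (hp : p ∈ K) :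
    ∃ t ∈ Icc a b, p ∈ convexHull ℝ {x | x ∈ frontier K ∧ τ x = t} := by
  have hC : IsCompact (chordsThrough (frontier K) p) := isCompact_chordsThrough
    (hK.of_isClosed_subset isClosed_frontier hK.isClosed.frontier_subset) p
  have hC₀ : (chordsThrough (frontier K) p).Nonempty :=
    (exists_mem_chordsThrough_frontier_map_eq hE hK.isBounded hp 0).imp fun _ h ↦ h.1
  have hτ₁ : ContinuousOn (fun q : E × E ↦ τ q.1) (chordsThrough (frontier K) p) :=
    hτc.comp continuousOn_fst fun q hq ↦ hq.1.1
  have hτ₂ : ContinuousOn (fun q : E × E ↦ τ q.2) (chordsThrough (frontier K) p) :=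
    hτc.comp continuousOn_snd fun q hq ↦ hq.1.2
  obtain ⟨q, hq, hqmax⟩ := hC.exists_isMaxOn hC₀ (hτ₁.inf hτ₂)
  obtain ⟨r, hr, hrmin⟩ := hC.exists_isMinOn hC₀ (hτ₁.sup hτ₂)
  set m := min (τ q.1) (τ q.2)
  set n := max (τ r.1) (τ r.2)
  have hm : m ∈ Icc a b := min_rec' (· ∈ Icc a b) (hτ hq.1.1) (hτ hq.1.2)
  have hn : n ∈ Icc a b := max_rec' (· ∈ Icc a b) (hτ hr.1.1) (hτ hr.1.2)
  have hnm : n ≤ m := by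
    by_contra! hmn
    obtain ⟨t, hmt, htn⟩ := exists_between hmn
    obtain ⟨φ, hφ⟩ := hsep t ⟨hm.1.trans hmt.le, htn.le.trans hn.2⟩
    obtain ⟨c, hc, hct | hct⟩ := hφ.exists_chord_le_min_or_max_le hE hK.isBounded hp
    · exact hmt.not_ge (hct.trans (hqmax hc))
    · exact htn.not_ge ((hrmin hc).trans hct)
  obtain ⟨φ, hφ⟩ := hsep m hm
  have hφp : φ p = 0 := le_antisymm (hφ.nonpos_of_mem_chordsThrough hr hnm)
    (hφ.nonneg_of_mem_chordsThrough hq le_rfl)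
  exact ⟨m, hm, hφ.mem_convexHull_of_map_eq_zero hE hK.isBounded hp hφp⟩

theorem existsUnique_level_mem_convexHull (hE : 1 < Module.rank ℝ E) (hK : IsCompact K)
    (hτc : ContinuousOn τ (frontier K)) (hτ : MapsTo τ (frontier K) (Icc a b))
    (hsep : ∀ t ∈ Icc a b, ∃ φ : E →ᵃ[ℝ] ℝ, SeparatesLevel φ τ t (frontier K)) (hp : p ∈ K) :
    ∃! t, t ∈ Icc a b ∧ p ∈ convexHull ℝ {x | x ∈ frontier K ∧ τ x = t} := by
  have not_lt_of_mem {t t' : ℝ} (ht : t ∈ Icc a b)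
      (hpt : p ∈ convexHull ℝ {x | x ∈ frontier K ∧ τ x = t})
      (hpt' : p ∈ convexHull ℝ {x | x ∈ frontier K ∧ τ x = t'}) : ¬ t < t' := fun hlt ↦
    let ⟨_, hφ⟩ := hsep t ht
    disjoint_left.1 (hφ.disjoint_convexHull hlt) hpt hpt'
  refine existsUnique_of_exists_of_unique (exists_level_mem_convexHull hE hK hτc hτ hsep hp) ?_
  rintro t t' ⟨ht, hpt⟩ ⟨ht', hpt'⟩
  exact le_antisymm (not_lt.1 (not_lt_of_mem ht' hpt' hpt)) (not_lt.1 (not_lt_of_mem ht hpt hpt'))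

end Levels

section AffineBasis

variable {ι : Type*} [Finite ι]

lemma exists_affineMap_apply_eq {k V P : Type*} [Field k] [AddCommGroup V]
    [Module k V] [AddTorsor V P] (b : AffineBasis ι k P) (c : ι → k) :
    ∃ φ : P →ᵃ[k] k, ∀ i, φ (b i) = c i := by
  classical
  have := Fintype.ofFinite ι
  exact ⟨(Fintype.linearCombination k c).toAffineMap.comp b.coords, fun i ↦ by
    simp [Fintype.linearCombination_apply, b.coord_apply]⟩

lemma convexHull_image_compl_singleton {E : Type*} [AddCommGroup E] [Module ℝ E]
    (b : AffineBasis ι ℝ E) (i : ι) :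
    convexHull ℝ (b '' {i}ᶜ) = {x | (∀ j, 0 ≤ b.coord j x) ∧ b.coord i x = 0} := by
  apply subset_antisymm
  · have hnonneg : convexHull ℝ (b '' {i}ᶜ) ⊆ {x | ∀ j, 0 ≤ b.coord j x} :=
      b.convexHull_eq_nonneg_coord ▸ convexHull_mono (image_subset_range b _)
    have hzero : convexHull ℝ (b '' {i}ᶜ) ⊆ b.coord i ⁻¹' {0} :=
      convexHull_min (image_subset_iff.2 fun j hj ↦ b.coord_apply_ne (Ne.symm hj))
        ((convex_singleton 0).affine_preimage (b.coord i))
    exact subset_inter hnonneg hzero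
  · rintro x ⟨hx, hxi⟩
    have := Fintype.ofFinite ι
    rw [← b.linear_combination_coord_eq_self x, ← finsum_eq_sum_of_fintype]
    refine (convex_convexHull ℝ (b '' {i}ᶜ)).finsum_mem hx ?_ fun j hj ↦
      subset_convexHull ℝ _ (mem_image_of_mem b fun hji ↦ hj (hji ▸ hxi))
    rw [finsum_eq_sum_of_fintype, b.sum_coord_apply_eq_one]

lemma frontier_convexHull_range {E : Type*} [NormedAddCommGroup E] [NormedSpace ℝ E]
    (b : AffineBasis ι ℝ E) :
    frontier (convexHull ℝ (range b)) = ⋃ i, convexHull ℝ (b '' {i}ᶜ) := by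
  have hclosed : IsClosed (convexHull ℝ (range b)) :=
    ((finite_range b).isCompact_convexHull ℝ).isClosed
  rw [hclosed.frontier_eq, b.interior_convexHull, b.convexHull_eq_nonneg_coord]
  ext x
  simp only [convexHull_image_compl_singleton, mem_sdiff, mem_ofPred_eq, mem_iUnion,
    exists_and_left, not_forall, not_lt]
  exact and_congr_right fun hx ↦ exists_congr fun i ↦ (hx i).ge_iff_eq'

end AffineBasis

section Edges

/-- The union of the segments joining two different points of the family `v`; for the vertices of
a triangle this is its boundary. -/
def edgeUnion {ι E : Type*} [AddCommGroup E] [Module ℝ E] (v : ι → E) : Set E :=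
  {x | ∃ i j, i ≠ j ∧ x ∈ segment ℝ (v i) (v j)}

/-- `τ` is strictly increasing along the segment from `v i` to `v j` whenever `i < j`: the
monotonicity assumption on `τ` once the order of its vertex values has fixed the direction. -/
def StrictMonoOnEdges {ι E : Type*} [Preorder ι] [AddCommGroup E] [Module ℝ E] (τ : E → ℝ)
    (v : ι → E) : Prop :=
  ∀ ⦃i j⦄, i < j → StrictMonoOn (τ ∘ lineMap (v i) (v j)) (Icc (0 : ℝ) 1)

variable {ι E : Type*} [AddCommGroup E] [Module ℝ E] {v : ι → E} {τ : E → ℝ} {t : ℝ}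

lemma edgeUnion_comp_equiv {κ : Type*} (e : κ ≃ ι) : edgeUnion (v ∘ e) = edgeUnion v := by
  ext x
  exact e.exists_congr fun i ↦ e.exists_congr fun j ↦ and_congr_left' e.injective.ne_iff.symm

lemma mem_edgeUnion_iff_lt [LinearOrder ι] {x : E} :
    x ∈ edgeUnion v ↔ ∃ i j, i < j ∧ x ∈ segment ℝ (v i) (v j) := by
  refine ⟨?_, fun ⟨i, j, hij, hx⟩ ↦ ⟨i, j, hij.ne, hx⟩⟩
  rintro ⟨i, j, hij, hx⟩
  rcases hij.lt_or_gt with hij | hji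
  · exact ⟨i, j, hij, hx⟩
  · exact ⟨j, i, hji, segment_symm ℝ (v i) (v j) ▸ hx⟩

lemma strictMonoOnEdges_of_strictMonoOn_or_strictAntiOn [Preorder ι] (hv : StrictMono (τ ∘ v))
    (h : ∀ i j, i < j → StrictMonoOn (τ ∘ lineMap (v i) (v j)) (Icc (0 : ℝ) 1) ∨
      StrictAntiOn (τ ∘ lineMap (v i) (v j)) (Icc (0 : ℝ) 1)) : StrictMonoOnEdges τ v := by
  refine fun i j hij ↦ (h i j hij).resolve_right fun hanti ↦ (hv hij).not_gt ?_
  simpa using hanti (left_mem_Icc.2 zero_le_one) (right_mem_Icc.2 zero_le_one) zero_lt_one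

lemma strictAntiOn_comp_lineMap_swap {x y : E}
    (h : StrictMonoOn (τ ∘ lineMap x y) (Icc (0 : ℝ) 1)) :
    StrictAntiOn (τ ∘ lineMap y x) (Icc (0 : ℝ) 1) := by
  intro r hr s hs hrs
  simpa [lineMap_apply_one_sub] using
    h (Icc.mem_iff_one_sub_mem.1 hs) (Icc.mem_iff_one_sub_mem.1 hr) (sub_lt_sub_left hrs 1)

lemma StrictMonoOnEdges.neg_comp_rev {n : ℕ} {v : Fin n → E} (h : StrictMonoOnEdges τ v) :
    StrictMonoOnEdges (-τ) (v ∘ Fin.rev) := fun _ _ hij ↦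
  (strictAntiOn_comp_lineMap_swap (h (Fin.rev_lt_rev.2 hij))).neg

lemma StrictMonoOnEdges.strictMono [Preorder ι] (h : StrictMonoOnEdges τ v) :
    StrictMono (τ ∘ v) := fun i j hij ↦ by
  simpa using h hij (left_mem_Icc.2 zero_le_one) (right_mem_Icc.2 zero_le_one) zero_lt_one

lemma StrictMonoOnEdges.mapsTo_Icc [LinearOrder ι] [BoundedOrder ι]
    (h : StrictMonoOnEdges τ v) : MapsTo τ (edgeUnion v) (Icc (τ (v ⊥)) (τ (v ⊤))) := by
  intro x hx
  obtain ⟨i, j, hij, hx⟩ := mem_edgeUnion_iff_lt.1 hx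
  rw [segment_eq_image_lineMap] at hx
  obtain ⟨s, hs, rfl⟩ := hx
  have hsτ := (h hij).monotoneOn.mapsTo_Icc hs
  simp only [Function.comp_apply, lineMap_apply_zero, lineMap_apply_one] at hsτ
  exact ⟨(h.strictMono.monotone bot_le).trans hsτ.1, hsτ.2.trans (h.strictMono.monotone le_top)⟩

lemma SeparatesLevel.segment {φ : E →ᵃ[ℝ] ℝ} {x y : E}
    (h : SeparatesLevel (lineMap (φ x) (φ y)) (τ ∘ lineMap x y) t (Icc (0 : ℝ) 1)) :
    SeparatesLevel φ τ t (segment ℝ x y) := by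
  rw [segment_eq_image_lineMap]
  rintro _ ⟨s, hs, rfl⟩
  rw [φ.apply_lineMap]
  exact h s hs

end Edges

section Triangle

variable {E : Type*} [NormedAddCommGroup E] [NormedSpace ℝ E] {τ : E → ℝ} {t : ℝ}

lemma continuousOn_comp_lineMap_of_edgeUnion {ι : Type*} {v : ι → E}
    (hτ : ContinuousOn τ (edgeUnion v)) {i j : ι} (hij : i ≠ j) :
    ContinuousOn (τ ∘ lineMap (v i) (v j)) (Icc (0 : ℝ) 1) :=
  hτ.comp lineMap_continuous.continuousOn fun _ hs ↦ ⟨i, j, hij, lineMap_mem_segment ℝ _ _ hs⟩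

lemma frontier_convexHull_range_eq_edgeUnion (b : AffineBasis (Fin 3) ℝ E) :
    frontier (convexHull ℝ (range b)) = edgeUnion b := by
  rw [frontier_convexHull_range]
  apply subset_antisymm
  · refine iUnion_subset fun i x hx ↦ ?_
    have hcompl : ({i}ᶜ : Set (Fin 3)) = {i + 1, i + 2} := by
      ext j
      simp only [mem_compl_iff, mem_singleton_iff, mem_insert_iff]
      lia
    rw [hcompl, image_pair, convexHull_pair] at hx
    exact ⟨i + 1, i + 2, by simp, hx⟩
  · rintro x ⟨i, j, -, hx⟩
    obtain ⟨k, hik, hjk⟩ := (by decide : ∀ i j : Fin 3, ∃ k, i ≠ k ∧ j ≠ k) i j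
    exact mem_iUnion.2 ⟨k, segment_subset_convexHull (mem_image_of_mem b hik)
      (mem_image_of_mem b hjk) hx⟩

lemma exists_separatesLevel_edgeUnion_of_le (b : AffineBasis (Fin 3) ℝ E)
    (hτc : ContinuousOn τ (edgeUnion b)) (hτ : StrictMonoOnEdges τ b)
    (ht : t ∈ Icc (τ (b 0)) (τ (b 1))) :
    ∃ φ : E →ᵃ[ℝ] ℝ, SeparatesLevel φ τ t (edgeUnion b) := by
  have exists_value (j : Fin 3) (hj : 0 < j) : ∃ c, SeparatesLevel (lineMap (τ (b 0) - t) c)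
      (τ ∘ lineMap (b 0) (b j)) t (Icc (0 : ℝ) 1) :=
    exists_separatesLevel_lineMap (continuousOn_comp_lineMap_of_edgeUnion hτc hj.ne) (hτ hj)
      (by simpa using ht.1) (by simp)
  obtain ⟨c₁, h₁⟩ := exists_value 1 (by decide)
  obtain ⟨c₂, h₂⟩ := exists_value 2 (by decide)
  have hc₁ : SignType.sign c₁ = SignType.sign (τ (b 1) - t) := by
    simpa using h₁ 1 (right_mem_Icc.2 zero_le_one)
  have hc₂ : 0 < c₂ := by
    have h12 : τ (b 1) < τ (b 2) := hτ.strictMono (by decide : (1 : Fin 3) < 2)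
    simpa [ht.2.trans_lt h12] using h₂.pos_iff (right_mem_Icc.2 zero_le_one)
  have h₁₂ : SeparatesLevel (lineMap c₁ c₂) (τ ∘ lineMap (b 1) (b 2)) t (Icc (0 : ℝ) 1) :=
    separatesLevel_lineMap_of_le (hτ (by decide)) (by simpa using ht.2) (by simpa using hc₁) hc₂
  obtain ⟨φ, hφ⟩ := exists_affineMap_apply_eq b ![τ (b 0) - t, c₁, c₂]
  obtain ⟨hφ₀, hφ₁, hφ₂⟩ : φ (b 0) = τ (b 0) - t ∧ φ (b 1) = c₁ ∧ φ (b 2) = c₂ :=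
    ⟨hφ 0, hφ 1, hφ 2⟩
  refine ⟨φ, fun x hx ↦ ?_⟩
  obtain ⟨i, j, hij, hx⟩ := mem_edgeUnion_iff_lt.1 hx
  refine SeparatesLevel.segment ?_ x hx
  obtain ⟨rfl, rfl⟩ | ⟨rfl, rfl⟩ | ⟨rfl, rfl⟩ :
      i = 0 ∧ j = 1 ∨ i = 0 ∧ j = 2 ∨ i = 1 ∧ j = 2 := by lia
  · rwa [hφ₀, hφ₁]
  · rwa [hφ₀, hφ₂]
  · rwa [hφ₁, hφ₂]

lemma exists_separatesLevel_edgeUnion (b : AffineBasis (Fin 3) ℝ E)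
    (hτc : ContinuousOn τ (edgeUnion b)) (hτ : StrictMonoOnEdges τ b)
    (ht : t ∈ Icc (τ (b 0)) (τ (b 2))) :
    ∃ φ : E →ᵃ[ℝ] ℝ, SeparatesLevel φ τ t (edgeUnion b) := by
  rcases le_total t (τ (b 1)) with ht₁ | ht₁
  · exact exists_separatesLevel_edgeUnion_of_le b hτc hτ ⟨ht.1, ht₁⟩
  · have hrev : edgeUnion (b.reindex Fin.revPerm) = edgeUnion b := edgeUnion_comp_equiv Fin.revPerm
    obtain ⟨φ, hφ⟩ := exists_separatesLevel_edgeUnion_of_le (b.reindex Fin.revPerm)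
      (τ := -τ) (t := -t) (hrev ▸ hτc.neg) hτ.neg_comp_rev ⟨neg_le_neg ht.2, neg_le_neg ht₁⟩
    rw [hrev] at hφ
    exact ⟨-φ, by simpa using hφ.neg⟩

theorem existsUnique_level_of_strictMonoOnEdges (b : AffineBasis (Fin 3) ℝ E)
    (hτc : ContinuousOn τ (frontier (convexHull ℝ (range b)))) (hτ : StrictMonoOnEdges τ b)
    {p : E} (hp : p ∈ convexHull ℝ (range b)) :
    ∃! t, t ∈ Icc (τ (b 0)) (τ (b 2)) ∧
      p ∈ convexHull ℝ {x | x ∈ frontier (convexHull ℝ (range b)) ∧ τ x = t} := by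
  have hE : 1 < Module.rank ℝ E := by
    have hcard := b.card_eq_finrank_add_one
    rw [Fintype.card_fin] at hcard
    exact Module.one_lt_rank_of_one_lt_finrank (by lia)
  refine existsUnique_level_mem_convexHull hE ((finite_range b).isCompact_convexHull ℝ) hτc ?_ ?_ hp
  · rw [frontier_convexHull_range_eq_edgeUnion]
    exact hτ.mapsTo_Icc
  · rw [frontier_convexHull_range_eq_edgeUnion] at hτc ⊢
    exact fun t ht ↦ exists_separatesLevel_edgeUnion b hτc hτ ht

end Triangle

theorem unique_level_through_interior_point_general {E : Type*} [NormedAddCommGroup E]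
    [NormedSpace ℝ E] (hE : Module.finrank ℝ E = 2) {v : Fin 3 → E} (hv : AffineIndependent ℝ v)
    {τ : E → ℝ} (hτc : ContinuousOn τ (frontier (convexHull ℝ {v 0, v 1, v 2})))
    (h01 : τ (v 0) < τ (v 1)) (h12 : τ (v 1) < τ (v 2))
    (hmono : ∀ i j : Fin 3, i < j →
      StrictMonoOn (fun t : ℝ ↦ τ ((1 - t) • v i + t • v j)) (Icc 0 1) ∨
      StrictAntiOn (fun t : ℝ ↦ τ ((1 - t) • v i + t • v j)) (Icc 0 1))
    {p : E} (hp : p ∈ convexHull ℝ {v 0, v 1, v 2}) :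
    ∃! t : ℝ, t ∈ Icc (τ (v 0)) (τ (v 2)) ∧
      p ∈ convexHull ℝ {x | x ∈ frontier (convexHull ℝ {v 0, v 1, v 2}) ∧ τ x = t} := by
  have hfin : FiniteDimensional ℝ E := .of_finrank_pos (by simp [hE])
  have hspan : affineSpan ℝ (range v) = ⊤ :=
    hv.affineSpan_eq_top_iff_card_eq_finrank_add_one.2 (by simp [hE])
  have hrange : {v 0, v 1, v 2} = range v := by
    ext x
    simp [Fin.exists_fin_succ, eq_comm]
  have hvmono : StrictMono (τ ∘ v) := Fin.strictMono_iff_lt_succ.2 fun i ↦ by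
    fin_cases i
    exacts [h01, h12]
  have hτ : StrictMonoOnEdges τ v := strictMonoOnEdges_of_strictMonoOn_or_strictAntiOn hvmono
    (by simpa only [Function.comp_def, lineMap_apply_module] using hmono)
  rw [hrange] at hτc hp ⊢
  exact existsUnique_level_of_strictMonoOnEdges ⟨v, hv, hspan⟩ hτc hτ hp

theorem unique_level_through_interior_point
    (v : Fin 3 → EuclideanSpace ℝ (Fin 2))
    (hv : AffineIndependent ℝ v)
    (T : Set (EuclideanSpace ℝ (Fin 2)))
    (hT : T = convexHull ℝ {v 0, v 1, v 2})
    (τ : EuclideanSpace ℝ (Fin 2) → ℝ)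
    (hτc : ContinuousOn τ (frontier T))
    (h01 : τ (v 0) < τ (v 1)) (h12 : τ (v 1) < τ (v 2))
    (hmono : ∀ i j : Fin 3, i < j →
      StrictMonoOn (fun t : ℝ => τ ((1 - t) • v i + t • v j)) (Set.Icc 0 1) ∨
      StrictAntiOn (fun t : ℝ => τ ((1 - t) • v i + t • v j)) (Set.Icc 0 1)) :
    ∀ p ∈ T, ∃! t : ℝ, t ∈ Set.Icc (τ (v 0)) (τ (v 2)) ∧
      p ∈ convexHull ℝ {x | x ∈ frontier T ∧ τ x = t} := by
  subst hT
  exact fun p hp ↦ unique_level_through_interior_point_general (by simp) hv hτc h01 h12 hmono hp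
end

section
/- Let n ≥ 2, let p : Fin (n+1) → ℝⁿ be an affinely independent family of points, and let Δ be the convex hull of the range of p (an n-simplex). Let f : ℝⁿ → ℝ be an affine map such that the values f(p 0), …, f(p n) are pairwise distinct, and let c ∈ ℝ satisfy min_i f(p i) < c < max_i f(p i) and c ≠ f(p i) for all i. Then the set (frontier Δ) ∩ f⁻¹({c}) is homeomorphic to the sphere S^{n−2} (the unit sphere in ℝ^{n−1}). -/
/-!
The simplex is a bounded convex set with nonempty interior that has points on both sides of the
hyperplane `f = c`. Its interior is connected and dense in it, so the hyperplane meets the interior.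
A hyperplane section through an interior point is a convex body in the hyperplane whose relative
frontier is the section of the frontier: segments from that point towards the closure stay in the
interior. Rescaling by the gauge carries the frontier of a convex body to the sphere.
-/

open Set Metric Bornology Module

theorem exists_mem_interior_eq_of_convex {E : Type*} [AddCommGroup E] [Module ℝ E]
    [TopologicalSpace E] [IsTopologicalAddGroup E] [ContinuousSMul ℝ E] {s : Set E}
    (hs : Convex ℝ s) (hne : (interior s).Nonempty) {f : E → ℝ} (hf : Continuous f) {c : ℝ}
    (hlt : ∃ x ∈ s, f x < c) (hgt : ∃ x ∈ s, c < f x) :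
    ∃ x ∈ interior s, f x = c := by
  have hdense : s ⊆ closure (interior s) :=
    (hs.closure_interior_eq_closure_of_nonempty_interior hne).symm ▸ subset_closure
  obtain ⟨a, has, hac⟩ := hlt
  obtain ⟨b, hbs, hcb⟩ := hgt
  obtain ⟨x, hxc, hx⟩ := mem_closure_iff.1 (hdense has) _ (isOpen_Iio.preimage hf) hac
  obtain ⟨y, hcy, hy⟩ := mem_closure_iff.1 (hdense hbs) _ (isOpen_Ioi.preimage hf) hcb
  exact hs.interior.isPreconnected.intermediate_value hx hy hf.continuousOn ⟨hxc.le, hcy.le⟩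

section AffinePreimage

variable {𝕜 E F : Type*} [Field 𝕜] [LinearOrder 𝕜] [IsStrictOrderedRing 𝕜] [TopologicalSpace 𝕜]
  [OrderTopology 𝕜] [AddCommGroup E] [Module 𝕜 E] [TopologicalSpace E] [IsTopologicalAddGroup E]
  [ContinuousSMul 𝕜 E] [AddCommGroup F] [Module 𝕜 F] [TopologicalSpace F] [IsTopologicalAddGroup F]
  [ContinuousSMul 𝕜 F] {s : Set E} {g : F →ᵃ[𝕜] E}

theorem closure_affine_preimage_interior (hs : Convex 𝕜 s) (hg : Continuous g)
    (hne : (g ⁻¹' interior s).Nonempty) :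
    closure (g ⁻¹' interior s) = g ⁻¹' closure s := by
  refine Subset.antisymm ((hg.closure_preimage_subset _).trans
    (preimage_mono (closure_mono interior_subset))) fun x hx ↦ ?_
  obtain ⟨y, hy⟩ := hne
  have hseg : openSegment 𝕜 y x ⊆ g ⁻¹' interior s := by
    rw [← image_subset_iff, image_openSegment]
    exact hs.openSegment_interior_closure_subset_interior hy hx
  exact closure_mono hseg (segment_subset_closure_openSegment (right_mem_segment 𝕜 y x))

theorem closure_affine_preimage (hs : Convex 𝕜 s) (hg : Continuous g)
    (hne : (g ⁻¹' interior s).Nonempty) : closure (g ⁻¹' s) = g ⁻¹' closure s := by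
  refine Subset.antisymm (hg.closure_preimage_subset s) ?_
  rw [← closure_affine_preimage_interior hs hg hne]
  exact closure_mono (preimage_mono interior_subset)

theorem interior_affine_preimage (hs : Convex 𝕜 s) (hg : Continuous g)
    (hne : (g ⁻¹' interior s).Nonempty) : interior (g ⁻¹' s) = g ⁻¹' interior s := by
  have hopen : IsOpen (g ⁻¹' interior s) := isOpen_interior.preimage hg
  refine Subset.antisymm ?_ (preimage_interior_subset_interior_preimage hg)
  calc interior (g ⁻¹' s)
      ⊆ interior (g ⁻¹' closure s) := interior_mono (preimage_mono subset_closure)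
    _ = interior (closure (g ⁻¹' interior s)) := by
      rw [closure_affine_preimage_interior hs hg hne]
    _ = interior (g ⁻¹' interior s) :=
      (hs.interior.affine_preimage g).interior_closure_eq_interior_of_nonempty_interior
        (hopen.interior_eq.symm ▸ hne)
    _ = g ⁻¹' interior s := hopen.interior_eq

theorem frontier_affine_preimage (hs : Convex 𝕜 s) (hg : Continuous g)
    (hne : (g ⁻¹' interior s).Nonempty) : frontier (g ⁻¹' s) = g ⁻¹' frontier s := by
  simp only [frontier, preimage_sdiff, closure_affine_preimage hs hg hne,
    interior_affine_preimage hs hg hne]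

end AffinePreimage

theorem exists_affineMap_range_eq_preimage_singleton {K V W : Type*} [Field K] [AddCommGroup V]
    [Module K V] [AddCommGroup W] [Module K W] [FiniteDimensional K W]
    (hdim : finrank K V = finrank K W + 1) (f : V →ᵃ[K] K) (hf : f.linear ≠ 0) (c : K) :
    ∃ g : W →ᵃ[K] V, Function.Injective g ∧ range g = f ⁻¹' {c} := by
  have : FiniteDimensional K V := .of_finrank_eq_succ hdim
  have hker : finrank K W = finrank K f.linear.ker := by
    have := Dual.finrank_ker_add_one_of_ne_zero hf
    omega
  obtain ⟨q, rfl⟩ := f.linear_surjective_iff.1 (LinearMap.surjective hf) c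
  let e : W ≃ₗ[K] f.linear.ker := .ofFinrankEq W f.linear.ker hker
  refine ⟨(f.linear.ker.subtype ∘ₗ e.toLinearMap).toAffineMap + AffineMap.const K W q,
    (add_left_injective q).comp (Subtype.val_injective.comp e.injective), ?_⟩
  ext x
  constructor
  · rintro ⟨w, rfl⟩
    simpa using f.map_vadd q (e w)
  · intro hx
    have hxq : f.linear (x - q) = 0 := by
      simpa [sub_eq_zero.2 hx] using f.linearMap_vsub x q
    exact ⟨e.symm ⟨x - q, hxq⟩, by simp⟩

section NormedSpace

variable {E F : Type*} [NormedAddCommGroup E] [NormedSpace ℝ E] [NormedAddCommGroup F]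
  [NormedSpace ℝ F] {s : Set E}

theorem nonempty_homeomorph_frontier_sphere (hs : Convex ℝ s) (hne : (interior s).Nonempty)
    (hb : IsBounded s) : Nonempty (frontier s ≃ₜ sphere (0 : E) 1) :=
  let ⟨h, _, _, hfrontier⟩ :=
    exists_homeomorph_image_interior_closure_frontier_eq_unitBall hs hne hb
  ⟨(h.image _).trans (.setCongr hfrontier)⟩

theorem nonempty_homeomorph_frontier_inter_range_sphere [FiniteDimensional ℝ F]
    (hs : Convex ℝ s) (hb : IsBounded s) {g : F →ᵃ[ℝ] E} (hg : Function.Injective g)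
    (hne : (g ⁻¹' interior s).Nonempty) :
    Nonempty (↥(frontier s ∩ range g) ≃ₜ sphere (0 : F) 1) := by
  obtain ⟨K, hK⟩ := g.antilipschitzWith_of_finiteDimensional hg
  obtain ⟨L, hL⟩ := g.lipschitzWith_of_finiteDimensional
  have hcont : Continuous g := hL.continuous
  have hemb : Topology.IsEmbedding g := (hK.isUniformEmbedding hL.uniformContinuous).isEmbedding
  have himage : g '' frontier (g ⁻¹' s) = frontier s ∩ range g := by
    rw [frontier_affine_preimage hs hcont hne, image_preimage_eq_inter_range]
  obtain ⟨e⟩ := nonempty_homeomorph_frontier_sphere (hs.affine_preimage g)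
    (hne.mono (preimage_interior_subset_interior_preimage hcont)) (hK.isBounded_preimage hb)
  exact ⟨((hemb.homeomorphImage _).trans (.setCongr himage)).symm.trans e⟩

theorem interior_convexHull_range_nonempty {ι : Type*} [Fintype ι] [FiniteDimensional ℝ E]
    {p : ι → E} (hp : AffineIndependent ℝ p) (hcard : Fintype.card ι = finrank ℝ E + 1) :
    (interior (convexHull ℝ (range p))).Nonempty := by
  rwa [interior_convexHull_nonempty_iff_affineSpan_eq_top,
    hp.affineSpan_eq_top_iff_card_eq_finrank_add_one]

theorem affine_level_set_on_simplex_boundary_is_sphere_general {n : ℕ} (hdim : finrank ℝ E = n + 1)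
    (hs : Convex ℝ s) (hne : (interior s).Nonempty) (hb : IsBounded s) (f : E →ᵃ[ℝ] ℝ) {c : ℝ}
    (hlt : ∃ x ∈ s, f x < c) (hgt : ∃ x ∈ s, c < f x) :
    Nonempty (↥(frontier s ∩ f ⁻¹' {c}) ≃ₜ sphere (0 : EuclideanSpace ℝ (Fin n)) 1) := by
  have : FiniteDimensional ℝ E := .of_finrank_eq_succ hdim
  have hlinear : f.linear ≠ 0 := by
    intro hzero
    obtain ⟨q, hq⟩ := f.linear_eq_zero_iff_exists_const.1 hzero
    obtain ⟨a, -, hac⟩ := hlt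
    obtain ⟨b, -, hcb⟩ := hgt
    simp only [hq, AffineMap.const_apply] at hac hcb
    exact lt_asymm hac hcb
  obtain ⟨x, hx, hxc⟩ :=
    exists_mem_interior_eq_of_convex hs hne f.continuous_of_finiteDimensional hlt hgt
  obtain ⟨g, hg, hrange⟩ := exists_affineMap_range_eq_preimage_singleton
    (W := EuclideanSpace ℝ (Fin n)) (by simpa using hdim) f hlinear c
  obtain ⟨y, rfl⟩ : x ∈ range g := hrange ▸ hxc
  exact hrange ▸ nonempty_homeomorph_frontier_inter_range_sphere hs hb hg ⟨y, hx⟩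

end NormedSpace

theorem affine_level_set_on_simplex_boundary_is_sphere
    (n : ℕ) (hn : 2 ≤ n)
    (p : Fin (n + 1) → EuclideanSpace ℝ (Fin n))
    (hp : AffineIndependent ℝ p)
    (Δ : Set (EuclideanSpace ℝ (Fin n)))
    (hΔ : Δ = convexHull ℝ (Set.range p))
    (f : EuclideanSpace ℝ (Fin n) →ᵃ[ℝ] ℝ)
    (hdist : Function.Injective (fun i => f (p i)))
    (c : ℝ)
    (hc1 : ∃ i, f (p i) < c) (hc2 : ∃ i, c < f (p i))
    (hc3 : ∀ i, c ≠ f (p i)) :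
    Nonempty (↥(frontier Δ ∩ f ⁻¹' {c}) ≃ₜ
      Metric.sphere (0 : EuclideanSpace ℝ (Fin (n - 1))) 1) := by
  have hmem (i : Fin (n + 1)) : p i ∈ Δ := hΔ ▸ subset_convexHull ℝ _ (mem_range_self i)
  subst hΔ
  exact affine_level_set_on_simplex_boundary_is_sphere_general
    (by rw [finrank_euclideanSpace_fin]; omega)
    (convex_convexHull ℝ _) (interior_convexHull_range_nonempty hp (by simp))
    (isBounded_convexHull.2 (finite_range p).isBounded) f
    (hc1.imp' p fun i hi ↦ ⟨hmem i, hi⟩) (hc2.imp' p fun i hi ↦ ⟨hmem i, hi⟩)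
end

section
/- There exists a sequence (f_i) of homeomorphisms of the closed interval [0,1], each fixing 0 and 1, such that: (i) no f_i is the identity map; (ii) any two of the f_i are topologically conjugate by an endpoint-fixing homeomorphism of [0,1]; and (iii) the sequence f_i converges uniformly to the identity map of [0,1]. -/
/-!
Let `f` be an order automorphism of `[0,1]` that fixes every point of `[a,1]` for some `a < 1`. Its
conjugate by `h` fixes every point of `[h a, 1]` and maps `[0, h a]` to itself, so it moves no point
by more than `h a`. Conjugating one such `f ≠ id` by `x ↦ x ^ (n + 1)`, where `a ^ (n + 1) → 0`,
gives the required sequence.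
-/

open Filter Topology unitInterval

/-- The order isomorphism given by a strictly increasing continuous map that preserves the
endpoints; surjectivity comes from the intermediate value theorem. -/
noncomputable def orderIsoOfContinuous {α β : Type*}
    [LinearOrder α] [BoundedOrder α] [TopologicalSpace α] [PreconnectedSpace α]
    [LinearOrder β] [BoundedOrder β] [TopologicalSpace β] [OrderClosedTopology β]
    (f : α → β) (hmono : StrictMono f) (hf : Continuous f) (hbot : f ⊥ = ⊥) (htop : f ⊤ = ⊤) :
    α ≃o β :=
  hmono.orderIsoOfSurjective f fun _ =>
    mem_range_of_exists_le_of_exists_ge hf ⟨⊥, hbot ▸ bot_le⟩ ⟨⊤, htop ▸ le_top⟩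

lemma conj_apply_eq_self_of_forall_ge {α : Type*} [Preorder α] {f : α ≃o α} {a : α}
    (hfix : ∀ x, a ≤ x → f x = x) (h : α ≃o α) {x : α} (hx : h a ≤ x) :
    (h * f * h⁻¹) x = x := by
  have hax : a ≤ h⁻¹ x := h.le_symm_apply.mpr hx
  calc (h * f * h⁻¹) x = h (f (h⁻¹ x)) := rfl
    _ = h (h⁻¹ x) := by rw [hfix _ hax]
    _ = x := h.apply_symm_apply x

lemma dist_apply_le_of_monotone_of_forall_ge {f : I → I} (hf : Monotone f) {a : I}
    (hfix : ∀ x, a ≤ x → f x = x) (x : I) : dist x (f x) ≤ a := by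
  rcases le_total a x with hax | hxa
  · rw [hfix x hax, dist_self]
    exact a.2.1
  · have hfx : f x ≤ a := (hf hxa).trans_eq (hfix a le_rfl)
    simpa [Subtype.dist_eq] using Real.dist_le_of_mem_Icc ⟨x.2.1, hxa⟩ ⟨(f x).2.1, hfx⟩

lemma tendstoUniformly_conj_id {ι : Type*} {l : Filter ι} {f : I ≃o I} {a : I}
    (hfix : ∀ x, a ≤ x → f x = x) {h : ι → I ≃o I} (hlim : Tendsto (fun i => h i a) l (𝓝 0)) :
    TendstoUniformly (fun i => ⇑(h i * f * (h i)⁻¹)) id l := by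
  rw [Metric.tendstoUniformly_iff]
  intro ε hε
  have hlim' : Tendsto (fun i => (h i a : ℝ)) l (𝓝 0) :=
    (continuous_subtype_val.tendsto 0).comp hlim
  filter_upwards [hlim'.eventually_lt_const hε] with i hi x
  exact (dist_apply_le_of_monotone_of_forall_ge (h i * f * (h i)⁻¹).monotone
    (fun _ => conj_apply_eq_self_of_forall_ge hfix (h i)) x).trans_lt hi

/-- The order automorphism `x ↦ x ^ n` of the unit interval, for `n ≠ 0`. -/
noncomputable def powOrderIso (n : ℕ) (hn : n ≠ 0) : I ≃o I :=
  orderIsoOfContinuous (fun x => x ^ n) (fun x _ hxy => pow_lt_pow_left₀ hxy x.2.1 hn)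
    (continuous_pow n) (zero_pow hn) (one_pow n)

lemma tendsto_powOrderIso_succ {a : I} (ha : a < 1) :
    Tendsto (fun n : ℕ => powOrderIso (n + 1) n.succ_ne_zero a) atTop (𝓝 0) := by
  rw [tendsto_subtype_rng]
  exact (tendsto_pow_atTop_nhds_zero_of_lt_one a.2.1 ha).comp (tendsto_add_atTop_nat 1)

lemma strictMonoOn_min_two_mul_sq :
    StrictMonoOn (fun x : ℝ => min x (2 * x ^ 2)) (Set.Ici 0) := fun _ hx _ _ hxy =>
  min_lt_min hxy (mul_lt_mul_of_pos_left (pow_lt_pow_left₀ hxy hx two_ne_zero) two_pos)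

/-- The order automorphism `x ↦ min x (2 * x ^ 2)` of the unit interval, a concrete nontrivial one
whose support lies in the left half. -/
noncomputable def leftHalfContraction : I ≃o I :=
  orderIsoOfContinuous
    (fun x => ⟨min (x : ℝ) (2 * (x : ℝ) ^ 2),
      le_min x.2.1 (by positivity), (min_le_left _ _).trans x.2.2⟩)
    (fun x y hxy => strictMonoOn_min_two_mul_sq x.2.1 y.2.1 hxy)
    (by fun_prop)
    (Subtype.ext <| by simp)
    (Subtype.ext <| by simp)

lemma coe_leftHalfContraction (x : I) : (leftHalfContraction x : ℝ) =
    min (x : ℝ) (2 * (x : ℝ) ^ 2) :=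
  rfl

lemma leftHalfContraction_apply_eq_self {x : I} (hx : (1 / 2 : ℝ) ≤ x) :
    leftHalfContraction x = x := by
  ext
  rw [coe_leftHalfContraction, min_eq_left]
  nlinarith

lemma leftHalfContraction_ne_one : leftHalfContraction ≠ 1 := by
  intro h
  have hquarter : min (1 / 4 : ℝ) (2 * (1 / 4) ^ 2) = 1 / 4 :=
    congrArg Subtype.val (DFunLike.congr_fun h (⟨1 / 4, by norm_num, by norm_num⟩ : I))
  norm_num at hquarter

theorem exists_conjugate_homeos_converging_to_id :
    ∃ f : ℕ → (unitInterval ≃ₜ unitInterval),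
      (∀ i, f i 0 = 0 ∧ f i 1 = 1) ∧
      (∀ i, ⇑(f i) ≠ id) ∧
      (∀ i j, ∃ h : unitInterval ≃ₜ unitInterval, h 0 = 0 ∧ h 1 = 1 ∧
        ∀ x, h (f i x) = f j (h x)) ∧
      TendstoUniformly (fun i => ⇑(f i)) id Filter.atTop := by
  let half : I := ⟨1 / 2, by norm_num, by norm_num⟩
  have half_lt_one : half < 1 := Subtype.coe_lt_coe.mp (by norm_num [half])
  let h (i : ℕ) : I ≃o I := powOrderIso (i + 1) i.succ_ne_zero
  let f (i : ℕ) : I ≃o I := h i * leftHalfContraction * (h i)⁻¹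
  have isConj_f (i : ℕ) : IsConj leftHalfContraction (f i) := isConj_iff.mpr ⟨h i, rfl⟩
  refine ⟨fun i => (f i).toHomeomorph, fun i => ⟨(f i).map_bot, (f i).map_top⟩, ?_, ?_, ?_⟩
  · intro i hi
    have hfi : f i = 1 := DFunLike.coe_injective hi
    exact leftHalfContraction_ne_one (conj_eq_one_iff.mp hfi)
  · intro i j
    obtain ⟨k, hk⟩ := isConj_iff.mp ((isConj_f i).symm.trans (isConj_f j))
    exact ⟨k.toHomeomorph, k.map_bot, k.map_top,
      DFunLike.congr_fun (mul_inv_eq_iff_eq_mul.mp hk)⟩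
  · exact tendstoUniformly_conj_id (a := half) (fun _ => leftHalfContraction_apply_eq_self)
      (tendsto_powOrderIso_succ half_lt_one)
end

section
/- Let B denote the closed unit ball in ℝ³, with open interior int(B) and boundary sphere S² = ∂B. Let λ ⊆ int(B) be a subset which is closed in the subspace topology of int(B) and such that int(B) \ λ has exactly two connected components. Let L = closure(λ) ∩ S² (the closure taken in ℝ³), and let D be a connected component of S² \ L. Then for any points p, q ∈ D and any sequences (p_i), (q_i) of points of int(B) \ λ with p_i → p and q_i → q, there exists N such that for all i ≥ N the points p_i and q_i lie in the same connected component of int(B) \ λ. -/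
/-!
Say that `x` and `y` are on the same side of `λ` if all points of `int(B) \ λ` close to `x` lie in
the same component as all those close to `y`. On points adherent to `int(B) \ λ` this relation is
symmetric and transitive. A point of `S²` off the closure of `λ` has a convex neighbourhood
missing `λ`, whose trace on the convex set `int(B)` is connected, so nearby points of `S²` are on
the same side. A relation with these properties is constant on connected sets such as `D`.
-/

open Filter Set Topology

section TopologicalSpace

variable {X : Type*} [TopologicalSpace X] {W : Set X} {x y z : X}

theorem mem_connectedComponentIn_symm (h : y ∈ connectedComponentIn W x) :
    x ∈ connectedComponentIn W y :=
  connectedComponentIn_eq h ▸ mem_connectedComponentIn (connectedComponentIn_nonempty_iff.1 ⟨y, h⟩)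

theorem mem_connectedComponentIn_trans (hxy : y ∈ connectedComponentIn W x)
    (hyz : z ∈ connectedComponentIn W y) : z ∈ connectedComponentIn W x :=
  connectedComponentIn_eq hxy ▸ hyz

/-- Points of `W` close to `x` lie in the same connected component of `W` as points of `W` close
to `y`: the points `x` and `y`, typically on the boundary of `W`, are on the same side. The
condition is vacuous if `x` or `y` is not in the closure of `W`. -/
def SameComponentNear (W : Set X) (x y : X) : Prop :=
  ∀ᶠ w in 𝓝[W] x ×ˢ 𝓝[W] y, w.2 ∈ connectedComponentIn W w.1

namespace SameComponentNear

theorem symm (h : SameComponentNear W x y) : SameComponentNear W y x :=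
  (eventually_swap_iff.1 h).mono fun _ ↦ mem_connectedComponentIn_symm

theorem trans (hy : y ∈ closure W) (hxy : SameComponentNear W x y)
    (hyz : SameComponentNear W y z) : SameComponentNear W x z :=
  have : (𝓝[W] y).NeBot := mem_closure_iff_nhdsWithin_neBot.1 hy
  Eventually.trans_prod (p := fun a b ↦ b ∈ connectedComponentIn W a)
    (q := fun b c ↦ c ∈ connectedComponentIn W b) hxy hyz
    fun _ _ _ ↦ mem_connectedComponentIn_trans

theorem of_isPreconnected {s : Set X} (hs : IsPreconnected s) (hsW : s ⊆ W)
    (hx : s ∈ 𝓝[W] x) (hy : s ∈ 𝓝[W] y) : SameComponentNear W x y := by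
  filter_upwards [prod_mem_prod hx hy] with w hw
  exact hs.subset_connectedComponentIn hw.1 hsW hw.2

theorem eventually_nhds {s : Set X} (hs : IsPreconnected s) (hsW : s ⊆ W) (hx : s ∈ 𝓝[W] x) :
    ∀ᶠ y in 𝓝 x, SameComponentNear W x y :=
  (eventually_nhds_nhdsWithin.2 hx).mono fun _ hy ↦ of_isPreconnected hs hsW hx hy

theorem of_mem_isPreconnected {D : Set X} (hD : IsPreconnected D) (hDW : D ⊆ closure W)
    (hloc : ∀ d ∈ D, ∃ s ∈ 𝓝[W] d, IsPreconnected s ∧ s ⊆ W) (hx : x ∈ D) (hy : y ∈ D) :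
    SameComponentNear W x y := by
  refine hD.induction₂ (SameComponentNear W) (fun d hd ↦ ?_)
    (fun _ _ _ _ hb _ ↦ trans (hDW hb)) (fun _ _ _ _ ↦ symm) hx hy
  obtain ⟨s, hsd, hs, hsW⟩ := hloc d hd
  exact eventually_nhdsWithin_of_eventually_nhds (eventually_nhds hs hsW hsd)

end SameComponentNear

end TopologicalSpace

section LocallyConvex

variable {E : Type*} [AddCommGroup E] [Module ℝ E] [TopologicalSpace E] [ContinuousAdd E]
  [ContinuousSMul ℝ E] [LocallyConvexSpace ℝ E] {U lam D : Set E}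

theorem exists_isPreconnected_mem_nhdsWithin_sdiff {d : E} (hU : Convex ℝ U)
    (hd : d ∉ closure lam) : ∃ s ∈ 𝓝[U \ lam] d, IsPreconnected s ∧ s ⊆ U \ lam := by
  obtain ⟨V, ⟨hVd, hV⟩, hVlam⟩ := (LocallyConvexSpace.convex_basis (𝕜 := ℝ) d).mem_iff.1
    (isClosed_closure.isOpen_compl.mem_nhds hd)
  refine ⟨V ∩ U, ?_, (hV.inter hU).isPreconnected,
    fun v hv ↦ ⟨hv.2, fun hvlam ↦ hVlam hv.1 (subset_closure hvlam)⟩⟩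
  exact inter_mem (mem_nhdsWithin_of_mem_nhds hVd)
    (mem_of_superset self_mem_nhdsWithin sdiff_subset)

theorem complementary_region_determines_side_general (hU : Convex ℝ U) (hD : IsPreconnected D)
    (hDU : D ⊆ closure U \ closure lam) {p q : E} (hp : p ∈ D) (hq : q ∈ D)
    {ι : Type*} {l : Filter ι} {ps qs : ι → E} (hps : Tendsto ps l (𝓝[U \ lam] p))
    (hqs : Tendsto qs l (𝓝[U \ lam] q)) :
    ∀ᶠ i in l, qs i ∈ connectedComponentIn (U \ lam) (ps i) := by
  have same_side : SameComponentNear (U \ lam) p q :=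
    .of_mem_isPreconnected hD (hDU.trans closure_sdiff)
      (fun _ hd ↦ exists_isPreconnected_mem_nhdsWithin_sdiff hU (hDU hd).2) hp hq
  exact (hps.prodMk hqs).eventually same_side

end LocallyConvex

theorem sphere_sdiff_closure_inter_subset {E : Type*} [SeminormedAddCommGroup E] [NormedSpace ℝ E]
    (c : E) {r : ℝ} (hr : r ≠ 0) (lam : Set E) :
    Metric.sphere c r \ (closure lam ∩ Metric.sphere c r) ⊆
      closure (Metric.ball c r) \ closure lam := by
  rw [sdiff_inter_self_eq_sdiff, closure_ball c hr]
  exact sdiff_subset_sdiff_left Metric.sphere_subset_closedBall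

theorem complementary_region_determines_side
    (lam : Set (EuclideanSpace ℝ (Fin 3)))
    (hsub : lam ⊆ Metric.ball (0 : EuclideanSpace ℝ (Fin 3)) 1)
    (hclosed : IsClosed
      (Subtype.val ⁻¹' lam : Set (Metric.ball (0 : EuclideanSpace ℝ (Fin 3)) 1)))
    (hcomp : Nat.card (ConnectedComponents
      ↥(Metric.ball (0 : EuclideanSpace ℝ (Fin 3)) 1 \ lam)) = 2)
    (L : Set (EuclideanSpace ℝ (Fin 3)))
    (hL : L = closure lam ∩ Metric.sphere (0 : EuclideanSpace ℝ (Fin 3)) 1)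
    (D : Set (EuclideanSpace ℝ (Fin 3)))
    (hD : ∃ x ∈ Metric.sphere (0 : EuclideanSpace ℝ (Fin 3)) 1 \ L,
      D = connectedComponentIn (Metric.sphere (0 : EuclideanSpace ℝ (Fin 3)) 1 \ L) x)
    (p q : EuclideanSpace ℝ (Fin 3)) (hp : p ∈ D) (hq : q ∈ D)
    (ps qs : ℕ → EuclideanSpace ℝ (Fin 3))
    (hps : ∀ i, ps i ∈ Metric.ball (0 : EuclideanSpace ℝ (Fin 3)) 1 \ lam)
    (hqs : ∀ i, qs i ∈ Metric.ball (0 : EuclideanSpace ℝ (Fin 3)) 1 \ lam)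
    (hp' : Filter.Tendsto ps Filter.atTop (nhds p))
    (hq' : Filter.Tendsto qs Filter.atTop (nhds q)) :
    ∃ N : ℕ, ∀ i ≥ N, qs i ∈ connectedComponentIn
      (Metric.ball (0 : EuclideanSpace ℝ (Fin 3)) 1 \ lam) (ps i) := by
  obtain ⟨x, -, rfl⟩ := hD
  subst hL
  exact eventually_atTop.1 <| complementary_region_determines_side_general (convex_ball 0 1)
    isPreconnected_connectedComponentIn
    ((connectedComponentIn_subset _ x).trans (sphere_sdiff_closure_inter_subset 0 one_ne_zero lam))
    hp hq (tendsto_nhdsWithin_iff.2 ⟨hp', .of_forall hps⟩)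
    (tendsto_nhdsWithin_iff.2 ⟨hq', .of_forall hqs⟩)
end
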